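/- lim_{N→∞} Σ_{n=−N+1}^{N−1} Σ_{m∈ℤ} (−1)^{m+n} / ((4m)² + 7(4n+1)²) = (π/(4√14)) · log( (1 + (√2 − 1)√(2√2 − √7)) / (1 − (√2 − 1)√(2√2 − √7)) ). -/

import Mathlib

open Filter

/-!
Write `7 = t ^ 2` with `t = √7`. The partial fraction expansion of the cotangent evaluates the inner
sum over `m` as a multiple of `(-1) ^ n / ((4 * n + 1) * sinh (π * t / 4 * (4 * n + 1)))`. Expanding
`1 / sinh` geometrically and exchanging the order of summation turns the sum over `n` into a series
of logarithms, which by the Jacobi triple product is the logarithm of the ratio of the theta values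
`ϑ(1/8, i t / 4)` and `ϑ(5/8, i t / 4)`. Duplication formulas express that ratio through the
complementary modulus `k'(t) = ϑ₄(i t) ^ 2 / ϑ₃(i t) ^ 2`: it equals `(1 + l) / (1 - l)` where
`l ^ 4 * (1 + k') = 1 - k'`.

At `t = √7` the point `α = (1 + i √7) / 2` satisfies `-1 / (α - 1) = α / 2`. The modular
transformation and the duplication formulas then give algebraic relations between the theta
constants at `α / 2`, `α` and `2 * α - 1 = i √7`, and solving them yields
`k'(√7) = √2 * (3 + √7) / 8`.
-/

section PartialFractions

open scoped Real
open Complex (I)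

lemma I_mul_ofReal_mem_integerComplement {b : ℝ} (hb : b ≠ 0) :
    I * (b : ℂ) ∈ Complex.integerComplement := by
  rintro ⟨n, hn⟩
  exact hb (by simpa using (congrArg Complex.im hn).symm)

lemma cotTerm_I_mul_ofReal {b : ℝ} (hb : b ≠ 0) (n : ℕ) :
    cotTerm (I * b) n = -2 * I * b * ((1 / (((n : ℝ) + 1) ^ 2 + b ^ 2) : ℝ) : ℂ) := by
  have hfactor : (I * b + (n + 1)) * (I * b - (n + 1)) = -(((n : ℂ) + 1) ^ 2 + (b : ℂ) ^ 2) := by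
    linear_combination (b : ℂ) ^ 2 * Complex.I_sq
  rw [cotTerm_identity (I_mul_ofReal_mem_integerComplement hb), hfactor]
  push_cast
  rw [one_div_neg_eq_neg_one_div]
  ring

lemma pi_mul_cot_I_mul_ofReal_sub {b : ℝ} (hb : b ≠ 0) :
    π * Complex.cot (π * (I * b)) - 1 / (I * b) =
      -2 * I * b *
        (((π * Real.cosh (π * b) / (b * Real.sinh (π * b)) - 1 / b ^ 2) / 2 : ℝ) : ℂ) := by
  have hsinh : Complex.sinh (π * b) ≠ 0 := by
    exact_mod_cast Real.sinh_ne_zero.mpr (mul_ne_zero Real.pi_ne_zero hb)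
  have hb' : (b : ℂ) ≠ 0 := mod_cast hb
  rw [show (π * (I * b) : ℂ) = π * b * I by ring, Complex.cot, Complex.cos_mul_I,
    Complex.sin_mul_I]
  push_cast
  field_simp
  linear_combination (b * π * Complex.cosh (π * b) - Complex.sinh (π * b)) * Complex.I_sq

lemma hasSum_one_div_int_sq_add_sq {b : ℝ} (hb : b ≠ 0) :
    HasSum (fun m : ℤ => 1 / ((m : ℝ) ^ 2 + b ^ 2))
      (π * Real.cosh (π * b) / (b * Real.sinh (π * b))) := by
  have hmem := I_mul_ofReal_mem_integerComplement hb
  have hcot := (summable_cotTerm hmem).hasSum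
  rw [show ∑' n, cotTerm (I * b) n = _ from (cot_series_rep' hmem).symm,
    pi_mul_cot_I_mul_ofReal_sub hb, funext (cotTerm_I_mul_ofReal hb),
    hasSum_mul_left_iff (by simp [hb]), Complex.hasSum_ofReal] at hcot
  have hint := HasSum.of_add_one_of_neg_add_one (f := fun m : ℤ => 1 / ((m : ℝ) ^ 2 + b ^ 2))
    (hcot.congr_fun fun n => by push_cast; ring) (hcot.congr_fun fun n => by push_cast; ring)
  convert hint using 1
  simp only [Int.cast_zero]
  ring

lemma hasSum_neg_one_zpow_mul {f : ℤ → ℝ} {a b : ℝ} (hf : HasSum f a)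
    (heven : HasSum (fun m => f (2 * m)) b) :
    HasSum (fun m => (-1) ^ m * f m) (2 * b - a) := by
  have heven' : HasSum ({m : ℤ | Even m}.indicator f) b := by
    rw [← range_two_mul, ← hasSum_subtype_iff_indicator]
    exact (mul_right_injective₀ two_ne_zero).hasSum_range_iff.mpr heven
  refine ((heven'.mul_left 2).sub hf).congr_fun fun m => ?_
  rcases Int.even_or_odd m with h | h
  · rw [h.neg_one_zpow, Set.indicator_of_mem (by simpa using h)]
    ring
  · rw [h.neg_one_zpow, Set.indicator_of_notMem (by simpa using h)]
    ring

lemma hasSum_neg_one_zpow_div_int_sq_add_sq {b : ℝ} (hb : b ≠ 0) :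
    HasSum (fun m : ℤ => (-1) ^ m / ((m : ℝ) ^ 2 + b ^ 2)) (π / (b * Real.sinh (π * b))) := by
  have heven : HasSum (fun m : ℤ => 1 / (((2 * m : ℤ) : ℝ) ^ 2 + b ^ 2))
      (1 / 4 * (π * Real.cosh (π * (b / 2)) / (b / 2 * Real.sinh (π * (b / 2))))) := by
    refine ((hasSum_one_div_int_sq_add_sq (div_ne_zero hb two_ne_zero)).mul_left (1 / 4)).congr_fun
      fun m => ?_
    rw [one_div_mul_one_div]
    push_cast
    ring_nf
  have halt := hasSum_neg_one_zpow_mul (hasSum_one_div_int_sq_add_sq hb) heven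
  convert halt.congr_fun fun m => (mul_one_div _ _).symm using 1
  have hsinh : Real.sinh (π * (b / 2)) ≠ 0 :=
    Real.sinh_ne_zero.mpr (mul_ne_zero Real.pi_ne_zero (div_ne_zero hb two_ne_zero))
  have hcosh : Real.cosh (π * (b / 2)) ≠ 0 := (Real.cosh_pos _).ne'
  rw [show π * b = 2 * (π * (b / 2)) by ring, Real.sinh_two_mul, Real.cosh_two_mul]
  field_simp [hsinh, hcosh]
  rw [Real.cosh_sq]
  ring

lemma tsum_neg_one_zpow_div_sq_add_sq {t : ℝ} (ht : t ≠ 0) (n : ℤ) :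
    ∑' m : ℤ, (-1 : ℝ) ^ (m + n) / ((4 * m) ^ 2 + t ^ 2 * (4 * n + 1) ^ 2) =
      π / (4 * t) * ((-1) ^ n / ((4 * n + 1) * Real.sinh (π * t / 4 * (4 * n + 1)))) := by
  have hn : (4 * n + 1 : ℝ) ≠ 0 := by norm_cast; lia
  have hsum := (hasSum_neg_one_zpow_div_int_sq_add_sq (b := t / 4 * (4 * n + 1))
    (by positivity)).mul_left ((-1) ^ n / 16)
  calc ∑' m : ℤ, (-1 : ℝ) ^ (m + n) / ((4 * m) ^ 2 + t ^ 2 * (4 * n + 1) ^ 2)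
      = ∑' m : ℤ, (-1) ^ n / 16 * ((-1) ^ m / ((m : ℝ) ^ 2 + (t / 4 * (4 * n + 1)) ^ 2)) :=
        tsum_congr fun m => by
          rw [zpow_add₀ (by norm_num), div_mul_div_comm]
          ring_nf
    _ = (-1) ^ n / 16 *
        (π / (t / 4 * (4 * n + 1) * Real.sinh (π * (t / 4 * (4 * n + 1))))) := hsum.tsum_eq
    _ = π / (4 * t) * ((-1) ^ n / ((4 * n + 1) * Real.sinh (π * t / 4 * (4 * n + 1)))) := by
        generalize (4 * n + 1 : ℝ) = s
        rw [show π * (t / 4 * s) = π * t / 4 * s by ring]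
        ring

end PartialFractions

section LambertSeries

open scoped Real
open Complex (I)

lemma injective_natAbs_four_mul_add_one :
    Function.Injective fun n : ℤ => (4 * n + 1).natAbs := by
  intro a b h
  dsimp only at h
  lia

lemma even_of_notMem_range_natAbs_four_mul_add_one {j : ℕ}
    (hj : j ∉ Set.range fun n : ℤ => (4 * n + 1).natAbs) : Even j := by
  by_contra hodd
  rw [Nat.not_even_iff] at hodd
  refine hj ?_
  by_cases hmod : j % 4 = 1
  · exact ⟨(j / 4 : ℕ), by dsimp only; lia⟩
  · exact ⟨-((j + 1) / 4 : ℕ), by dsimp only; lia⟩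

lemma odd_natAbs_four_mul_add_one (n : ℤ) : Odd (4 * n + 1).natAbs :=
  Int.natAbs_odd.mpr ⟨2 * n, by ring⟩

lemma natAbs_four_mul_add_one_pos (n : ℤ) : 0 < (4 * n + 1).natAbs := by lia

lemma hasSum_pow_natAbs_four_mul_add_one_div {w : ℂ} (hw : ‖w‖ < 1) :
    HasSum (fun n : ℤ => w ^ (4 * n + 1).natAbs / ((4 * n + 1).natAbs : ℂ))
      ((Complex.log (1 + w) - Complex.log (1 - w)) / 2) := by
  have hodd := ((Complex.hasSum_taylorSeries_neg_log hw).sub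
    (Complex.hasSum_taylorSeries_neg_log (z := -w) (by rwa [norm_neg]))).div_const 2
  rw [neg_sub_neg, sub_neg_eq_add, ← injective_natAbs_four_mul_add_one.hasSum_iff] at hodd
  · refine hodd.congr_fun fun n => ?_
    simp only [Function.comp, (odd_natAbs_four_mul_add_one n).neg_pow]
    ring
  · intro j hj
    rw [(even_of_notMem_range_natAbs_four_mul_add_one hj).neg_pow, sub_self, zero_div]

lemma cos_natAbs_four_mul_add_one_mul_pi_div_four (n : ℤ) :
    Real.cos ((4 * n + 1).natAbs * (π / 4)) = (-1) ^ n * (√2 / 2) := by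
  rw [← Real.cos_pi_div_four, ← Real.cos_add_int_mul_pi, Nat.cast_natAbs, Int.cast_abs,
    ← Real.cos_abs, abs_mul, abs_abs, ← abs_mul, Real.cos_abs]
  push_cast
  ring_nf

lemma re_ofReal_mul_exp_pow_natAbs (X : ℝ) (n : ℤ) :
    (((X : ℂ) * Complex.exp ((π / 4 : ℝ) * I)) ^ (4 * n + 1).natAbs).re =
      X ^ (4 * n + 1).natAbs * ((-1) ^ n * (√2 / 2)) := by
  rw [← cos_natAbs_four_mul_add_one_mul_pi_div_four, mul_pow, ← Complex.exp_nat_mul,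
    ← Complex.ofReal_pow, Complex.re_ofReal_mul, ← mul_assoc, ← Complex.ofReal_natCast,
    ← Complex.ofReal_mul, Complex.exp_ofReal_mul_I_re]

lemma one_sub_sqrt_two_mul_add_sq_pos (Q : ℝ) : 0 < 1 - √2 * Q + Q ^ 2 := by
  nlinarith [sq_nonneg (√2 - 2 * Q), Real.sq_sqrt zero_le_two]

lemma one_add_sqrt_two_mul_add_sq_pos (Q : ℝ) : 0 < 1 + √2 * Q + Q ^ 2 := by
  simpa using one_sub_sqrt_two_mul_add_sq_pos (-Q)

lemma two_mul_log_norm_one_add_ofReal_mul_exp (X : ℝ) :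
    2 * Real.log ‖1 + (X : ℂ) * Complex.exp ((π / 4 : ℝ) * I)‖ =
      Real.log (1 + √2 * X + X ^ 2) := by
  have hnorm : ‖1 + (X : ℂ) * Complex.exp ((π / 4 : ℝ) * I)‖ ^ 2 = 1 + √2 * X + X ^ 2 := by
    rw [Complex.sq_norm, Complex.normSq_apply]
    simp only [Complex.add_re, Complex.add_im, Complex.one_re, Complex.one_im,
      Complex.re_ofReal_mul, Complex.im_ofReal_mul, Complex.exp_ofReal_mul_I_re,
      Complex.exp_ofReal_mul_I_im, Real.cos_pi_div_four, Real.sin_pi_div_four]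
    linear_combination X ^ 2 / 2 * Real.sq_sqrt zero_le_two
  rw [← hnorm, Real.log_pow, Nat.cast_ofNat]

-- The sign `(-1) ^ n` comes from the real part of `exp (π * I / 4) ^ |4 * n + 1|`.
lemma hasSum_neg_one_zpow_mul_pow_natAbs_div {X : ℝ} (hX : |X| < 1) :
    HasSum (fun n : ℤ => (-1) ^ n * X ^ (4 * n + 1).natAbs / ((4 * n + 1).natAbs : ℝ))
      (1 / (2 * √2) * Real.log ((1 + √2 * X + X ^ 2) / (1 - √2 * X + X ^ 2))) := by
  set w : ℂ := X * Complex.exp ((π / 4 : ℝ) * I) with hw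
  have hw_norm : ‖w‖ < 1 := by
    rwa [hw, norm_mul, Complex.norm_exp_ofReal_mul_I, mul_one, Complex.norm_real]
  have hre := (Complex.hasSum_re (hasSum_pow_natAbs_four_mul_add_one_div hw_norm)).mul_left √2
  have hlog_add := two_mul_log_norm_one_add_ofReal_mul_exp X
  have hlog_sub := two_mul_log_norm_one_add_ofReal_mul_exp (-X)
  rw [Complex.ofReal_neg, neg_mul, ← sub_eq_add_neg, neg_sq, mul_neg, ← sub_eq_add_neg] at hlog_sub
  have hval : 1 / (2 * √2) * Real.log ((1 + √2 * X + X ^ 2) / (1 - √2 * X + X ^ 2)) =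
      √2 * ((Complex.log (1 + w) - Complex.log (1 - w)) / 2).re := by
    rw [Real.log_div (one_add_sqrt_two_mul_add_sq_pos X).ne'
      (one_sub_sqrt_two_mul_add_sq_pos X).ne', ← hlog_add, ← hlog_sub, ← hw, Complex.div_ofNat_re,
      Complex.sub_re, Complex.log_re, Complex.log_re]
    field_simp
    linear_combination -(Real.log ‖1 + w‖ - Real.log ‖1 - w‖) * Real.sq_sqrt zero_le_two
  rw [hval]
  refine hre.congr_fun fun n => ?_
  rw [Complex.div_natCast_re, hw, re_ofReal_mul_exp_pow_natAbs]
  linear_combination -((-1) ^ n * X ^ (4 * n + 1).natAbs / ((4 * n + 1).natAbs : ℝ) / 2) *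
    Real.sq_sqrt zero_le_two

lemma hasSum_two_mul_exp_neg_pow_odd {x : ℝ} (hx : 0 < x) :
    HasSum (fun k : ℕ => 2 * Real.exp (-x) ^ (2 * k + 1)) (1 / Real.sinh x) := by
  have hlt : Real.exp (-x) ^ 2 < 1 :=
    pow_lt_one₀ (Real.exp_pos _).le (Real.exp_lt_one_iff.mpr (neg_lt_zero.mpr hx)) two_ne_zero
  have hval : 1 / Real.sinh x = 2 * Real.exp (-x) * (1 - Real.exp (-x) ^ 2)⁻¹ := by
    have hne : 1 - Real.exp (-x) ^ 2 ≠ 0 := (sub_pos.mpr hlt).ne'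
    rw [Real.sinh_eq, ← inv_inv (Real.exp x), ← Real.exp_neg]
    field_simp [hne]
  rw [hval]
  refine ((hasSum_geometric_of_lt_one (sq_nonneg _) hlt).mul_left _).congr_fun fun k => ?_
  rw [pow_succ, pow_mul]
  ring

lemma natAbs_mul_sinh_mul_natAbs (c : ℝ) (a : ℤ) :
    (a.natAbs : ℝ) * Real.sinh (c * a.natAbs) = a * Real.sinh (c * a) := by
  rw [Nat.cast_natAbs, Int.cast_abs]
  rcases abs_choice (a : ℝ) with h | h <;> simp [h]

/-- The terms of the double series obtained by expanding `1 / sinh` geometrically in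
`∑ n : ℤ, (-1) ^ n / (2 * (4 * n + 1) * sinh (c * (4 * n + 1)))`, with `y = exp (-c)`. -/
noncomputable def lambertTerm (y : ℝ) (p : ℤ × ℕ) : ℝ :=
  (-1) ^ p.1 * (y ^ (2 * p.2 + 1)) ^ (4 * p.1 + 1).natAbs / ((4 * p.1 + 1).natAbs : ℝ)

lemma summable_lambertTerm {y : ℝ} (hy₀ : 0 ≤ y) (hy₁ : y < 1) : Summable (lambertTerm y) := by
  have hgeom := summable_geometric_of_lt_one hy₀ hy₁
  refine Summable.of_norm_bounded
    ((hgeom.comp_injective injective_natAbs_four_mul_add_one).mul_of_nonneg hgeom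
      (fun _ => pow_nonneg hy₀ _) (fun _ => pow_nonneg hy₀ _)) ?_
  rintro ⟨n, k⟩
  have hpos := natAbs_four_mul_add_one_pos n
  simp only [lambertTerm, Function.comp]
  generalize (4 * n + 1).natAbs = j at hpos
  have hj : (1 : ℝ) ≤ j := by exact_mod_cast hpos
  calc ‖(-1) ^ n * (y ^ (2 * k + 1)) ^ j / (j : ℝ)‖ = y ^ ((2 * k + 1) * j) / j := by
        rw [norm_div, norm_mul, norm_zpow, norm_neg, norm_one, one_zpow, one_mul, ← pow_mul,
          Real.norm_of_nonneg (pow_nonneg hy₀ _), Real.norm_natCast]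
    _ ≤ y ^ ((2 * k + 1) * j) := div_le_self (pow_nonneg hy₀ _) hj
    _ ≤ y ^ (j + k) := pow_le_pow_of_le_one hy₀ hy₁.le (by nlinarith)
    _ = y ^ j * y ^ k := pow_add _ _ _

lemma hasSum_lambertTerm_snd {c : ℝ} (hc : 0 < c) (n : ℤ) :
    HasSum (fun k => lambertTerm (Real.exp (-c)) (n, k))
      ((-1) ^ n / (2 * ((4 * n + 1) * Real.sinh (c * (4 * n + 1))))) := by
  have hpos := natAbs_four_mul_add_one_pos n
  have hsinh := natAbs_mul_sinh_mul_natAbs c (4 * n + 1)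
  push_cast at hsinh
  rw [← hsinh]
  simp only [lambertTerm]
  generalize (4 * n + 1).natAbs = j at hpos
  have hj : (0 : ℝ) < j := by exact_mod_cast hpos
  rw [show (-1) ^ n / (2 * (j * Real.sinh (c * j))) =
    (-1) ^ n / (2 * (j : ℝ)) * (1 / Real.sinh (c * j)) by ring]
  refine ((hasSum_two_mul_exp_neg_pow_odd (mul_pos hc hj)).mul_left _).congr_fun fun k => ?_
  rw [show -(c * j) = j * -c by ring, Real.exp_nat_mul, ← pow_mul, ← pow_mul, mul_comm j]
  ring

lemma hasSum_lambertTerm_fst {y : ℝ} (hy₀ : 0 ≤ y) (hy₁ : y < 1) (k : ℕ) :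
    HasSum (fun n => lambertTerm y (n, k))
      (1 / (2 * √2) * Real.log ((1 + √2 * y ^ (2 * k + 1) + (y ^ (2 * k + 1)) ^ 2) /
        (1 - √2 * y ^ (2 * k + 1) + (y ^ (2 * k + 1)) ^ 2))) := by
  have hlt : |y ^ (2 * k + 1)| < 1 := by
    rw [abs_of_nonneg (pow_nonneg hy₀ _)]
    exact pow_lt_one₀ hy₀ hy₁ (by lia)
  simpa only [lambertTerm] using hasSum_neg_one_zpow_mul_pow_natAbs_div hlt

lemma hasSum_neg_one_zpow_div_mul_sinh {c : ℝ} (hc : 0 < c) :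
    HasSum (fun n : ℤ => (-1) ^ n / ((4 * n + 1) * Real.sinh (c * (4 * n + 1))))
      (2 * ∑' p, lambertTerm (Real.exp (-c)) p) := by
  have hsummable := summable_lambertTerm (Real.exp_pos (-c)).le
    (Real.exp_lt_one_iff.mpr (neg_lt_zero.mpr hc))
  refine ((hsummable.hasSum.prod_fiberwise (hasSum_lambertTerm_snd hc)).mul_left 2).congr_fun
    fun n => ?_
  rw [mul_div_assoc', mul_div_mul_left _ _ two_ne_zero]

lemma hasSum_log_one_add_div_one_sub {y : ℝ} (hy₀ : 0 ≤ y) (hy₁ : y < 1) :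
    HasSum (fun k : ℕ => Real.log ((1 + √2 * y ^ (2 * k + 1) + (y ^ (2 * k + 1)) ^ 2) /
        (1 - √2 * y ^ (2 * k + 1) + (y ^ (2 * k + 1)) ^ 2)))
      (2 * √2 * ∑' p, lambertTerm y p) := by
  have hswap : HasSum (fun p : ℕ × ℤ => lambertTerm y p.swap) (∑' p, lambertTerm y p) :=
    (Equiv.prodComm ℕ ℤ).hasSum_iff.mpr (summable_lambertTerm hy₀ hy₁).hasSum
  refine ((hswap.prod_fiberwise (hasSum_lambertTerm_fst hy₀ hy₁)).mul_left (2 * √2)).congr_fun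
    fun k => ?_
  rw [← mul_assoc, mul_one_div_cancel (by positivity), one_mul]

lemma tsum_lambertTerm_nonneg {y : ℝ} (hy₀ : 0 ≤ y) (hy₁ : y < 1) :
    0 ≤ ∑' p, lambertTerm y p := by
  refine nonneg_of_mul_nonneg_right (a := 2 * √2)
    ((hasSum_log_one_add_div_one_sub hy₀ hy₁).nonneg fun k => Real.log_nonneg ?_) (by positivity)
  rw [one_le_div (one_sub_sqrt_two_mul_add_sq_pos _)]
  have : 0 ≤ √2 * y ^ (2 * k + 1) := by positivity
  linarith

end LambertSeries

section TripleProduct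

open scoped Real
open Complex (I)

/-- The reciprocal `q`-factorial `1 / ((1 - p) ⋯ (1 - p ^ a))` in base `p`, extended by zero to
negative `a`; it plays the role of `1 / Γ (a + 1)`. -/
noncomputable def invQFactorial (p : ℂ) (a : ℤ) : ℂ :=
  if a < 0 then 0 else (∏ i ∈ Finset.range a.toNat, (1 - p ^ (i + 1)))⁻¹

/-- The Gaussian binomial coefficient `2 * K` choose `K + n` in base `p`, which vanishes for
`K < |n|`; these are the coefficients of the finite form of the Jacobi triple product. -/
noncomputable def centralQBinomial (p : ℂ) (K : ℕ) (n : ℤ) : ℂ :=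
  (∏ i ∈ Finset.range (2 * K), (1 - p ^ (i + 1))) *
    (invQFactorial p (K + n) * invQFactorial p (K - n))

lemma one_add_mul_pow_ne_zero {c q : ℂ} (hc : ‖c‖ ≤ 1) (hq : ‖q‖ < 1) {n : ℕ} (hn : n ≠ 0) :
    1 + c * q ^ n ≠ 0 := by
  intro h
  have hlt : ‖c * q ^ n‖ < 1 := by
    rw [norm_mul, norm_pow]
    exact mul_lt_one_of_nonneg_of_lt_one_right hc (by positivity)
      (pow_lt_one₀ (norm_nonneg q) hq hn)
  rw [← neg_eq_of_add_eq_zero_right h, norm_neg, norm_one] at hlt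
  exact hlt.false

lemma one_sub_pow_succ_ne_zero {p : ℂ} (hp : ‖p‖ < 1) (i : ℕ) : 1 - p ^ (i + 1) ≠ 0 := by
  have h := one_add_mul_pow_ne_zero (c := -1) (by simp) hp i.succ_ne_zero
  rwa [neg_one_mul, ← sub_eq_add_neg] at h

lemma invQFactorial_eq_mul_invQFactorial_add_one {p : ℂ} (hp : ‖p‖ < 1) (a : ℤ) :
    invQFactorial p a = (1 - p ^ (a + 1)) * invQFactorial p (a + 1) := by
  rcases lt_trichotomy a (-1) with ha | rfl | ha
  · simp only [invQFactorial, if_pos (show a < 0 by lia), if_pos (show a + 1 < 0 by lia), mul_zero]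
  · simp [invQFactorial]
  · obtain ⟨n, rfl⟩ := Int.eq_ofNat_of_zero_le (show 0 ≤ a by lia)
    have hne := one_sub_pow_succ_ne_zero hp n
    have hpow : p ^ ((n : ℤ) + 1) = p ^ (n + 1) := mod_cast rfl
    simp only [invQFactorial, if_neg (show ¬(n : ℤ) < 0 by lia),
      if_neg (show ¬(n : ℤ) + 1 < 0 by lia), show ((n : ℤ) + 1).toNat = n + 1 by lia,
      Int.toNat_natCast, Finset.prod_range_succ, mul_inv, hpow]
    field_simp

lemma centralQBinomial_zero (p : ℂ) (n : ℤ) :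
    centralQBinomial p 0 n = if n = 0 then 1 else 0 := by
  rcases lt_trichotomy n 0 with hn | rfl | hn
  · simp [centralQBinomial, invQFactorial, hn, hn.ne]
  · simp [centralQBinomial, invQFactorial]
  · simp [centralQBinomial, invQFactorial, hn, hn.ne']

lemma centralQBinomial_succ {p : ℂ} (hp₀ : p ≠ 0) (hp : ‖p‖ < 1) (K : ℕ) (n : ℤ) :
    centralQBinomial p (K + 1) n =
      (1 + p ^ (2 * K + 1)) * centralQBinomial p K n +
        p ^ ((K : ℤ) + 1 - n) * centralQBinomial p K (n - 1) +
        p ^ ((K : ℤ) + 1 + n) * centralQBinomial p K (n + 1) := by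
  have hpow : p ^ (2 * K + 1) = p * p ^ ((K : ℤ) + n) * p ^ ((K : ℤ) - n) := by
    rw [mul_assoc, ← zpow_add₀ hp₀, show (K : ℤ) + n + (K - n) = (2 * K : ℕ) by push_cast; ring,
      zpow_natCast, pow_succ']
  simp only [centralQBinomial]
  rw [show 2 * (K + 1) = 2 * K + 1 + 1 by ring, Finset.prod_range_succ, Finset.prod_range_succ,
    show (K : ℤ) + (n - 1) = K + n - 1 by ring, show (K : ℤ) - (n + 1) = K - n - 1 by ring,
    show (K : ℤ) - (n - 1) = K - n + 1 by ring, show (K : ℤ) + (n + 1) = K + n + 1 by ring,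
    show ((K + 1 : ℕ) : ℤ) + n = K + n + 1 by push_cast; ring,
    show ((K + 1 : ℕ) : ℤ) - n = K - n + 1 by push_cast; ring,
    show (K : ℤ) + 1 - n = K - n + 1 by ring, show (K : ℤ) + 1 + n = K + n + 1 by ring,
    invQFactorial_eq_mul_invQFactorial_add_one hp (K + n - 1),
    invQFactorial_eq_mul_invQFactorial_add_one hp (K - n - 1), sub_add_cancel, sub_add_cancel,
    invQFactorial_eq_mul_invQFactorial_add_one hp (K + n),
    invQFactorial_eq_mul_invQFactorial_add_one hp (K - n), pow_succ p (2 * K + 1), hpow,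
    zpow_add_one₀ hp₀, zpow_add_one₀ hp₀]
  ring

lemma mul_zpow_sub_one_mul_zpow_sq {q x : ℂ} (hq₀ : q ≠ 0) (hx₀ : x ≠ 0) (K : ℕ) (n : ℤ) :
    x * q ^ (2 * K + 1) * (x ^ (n - 1) * q ^ ((n - 1) ^ 2)) =
      (q ^ 2) ^ ((K : ℤ) + 1 - n) * (x ^ n * q ^ (n ^ 2)) := by
  have hq : q ^ (2 * K + 1) * q ^ ((n - 1) ^ 2) = (q ^ 2) ^ ((K : ℤ) + 1 - n) * q ^ (n ^ 2) := by
    rw [← zpow_natCast q (2 * K + 1), ← zpow_natCast q 2, ← zpow_mul, ← zpow_add₀ hq₀,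
      ← zpow_add₀ hq₀]
    push_cast
    ring_nf
  have hx : x ^ n = x ^ (n - 1) * x := by rw [← zpow_add_one₀ hx₀, sub_add_cancel]
  rw [hx]
  linear_combination x * x ^ (n - 1) * hq

lemma inv_mul_zpow_add_one_mul_zpow_sq {q x : ℂ} (hq₀ : q ≠ 0) (hx₀ : x ≠ 0) (K : ℕ) (n : ℤ) :
    x⁻¹ * q ^ (2 * K + 1) * (x ^ (n + 1) * q ^ ((n + 1) ^ 2)) =
      (q ^ 2) ^ ((K : ℤ) + 1 + n) * (x ^ n * q ^ (n ^ 2)) := by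
  have h := mul_zpow_sub_one_mul_zpow_sq hq₀ (inv_ne_zero hx₀) K (-n)
  rw [inv_zpow', inv_zpow', neg_neg, neg_sq, sub_neg_eq_add] at h
  rw [← h, show (-n - 1 : ℤ) = -(n + 1) by ring, neg_neg, neg_sq]

lemma hasSum_centralQBinomial_mul {q x : ℂ} (hq₀ : q ≠ 0) (hq : ‖q‖ < 1) (hx₀ : x ≠ 0) (K : ℕ) :
    HasSum (fun n : ℤ => centralQBinomial (q ^ 2) K n * (x ^ n * q ^ (n ^ 2)))
      (∏ k ∈ Finset.range K, (1 + x * q ^ (2 * k + 1)) * (1 + x⁻¹ * q ^ (2 * k + 1))) := by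
  have hp : ‖q ^ 2‖ < 1 :=
    (norm_pow q 2).trans_lt (pow_lt_one₀ (norm_nonneg q) hq two_ne_zero)
  induction K with
  | zero =>
    refine (hasSum_ite_eq (0 : ℤ) (1 : ℂ)).congr_fun fun n => ?_
    rcases eq_or_ne n 0 with rfl | hn <;> simp [centralQBinomial_zero, *]
  | succ K ih =>
    have hpred := (Equiv.subRight (1 : ℤ)).hasSum_iff.mpr ih
    have hsucc := (Equiv.addRight (1 : ℤ)).hasSum_iff.mpr ih
    have hstep := ((ih.mul_left (1 + (q ^ 2) ^ (2 * K + 1))).add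
      (hpred.mul_left (x * q ^ (2 * K + 1)))).add (hsucc.mul_left (x⁻¹ * q ^ (2 * K + 1)))
    rw [← add_mul, ← add_mul, show 1 + (q ^ 2) ^ (2 * K + 1) + x * q ^ (2 * K + 1) +
      x⁻¹ * q ^ (2 * K + 1) = (1 + x * q ^ (2 * K + 1)) * (1 + x⁻¹ * q ^ (2 * K + 1)) by
        linear_combination -(q ^ (2 * K + 1)) ^ 2 * mul_inv_cancel₀ hx₀] at hstep
    rw [Finset.prod_range_succ, mul_comm]
    refine hstep.congr_fun fun n => ?_
    rw [centralQBinomial_succ (pow_ne_zero 2 hq₀) hp]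
    simp only [Function.comp, Equiv.subRight_apply, Equiv.coe_addRight]
    linear_combination
      -centralQBinomial (q ^ 2) K (n - 1) * mul_zpow_sub_one_mul_zpow_sq hq₀ hx₀ K n -
        centralQBinomial (q ^ 2) K (n + 1) * inv_mul_zpow_add_one_mul_zpow_sq hq₀ hx₀ K n

lemma tendsto_prod_one_sub_pow {p : ℂ} (hp : ‖p‖ < 1) :
    Tendsto (fun K => ∏ i ∈ Finset.range K, (1 - p ^ (i + 1))) atTop
      (nhds (∏' i, (1 - p ^ (i + 1)))) :=
  (ModularForm.multipliable_one_sub_pow hp).hasProd.tendsto_prod_nat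

lemma tprod_one_sub_pow_ne_zero {p : ℂ} (hp : ‖p‖ < 1) : ∏' i, (1 - p ^ (i + 1)) ≠ 0 := by
  simp only [sub_eq_add_neg]
  refine tprod_one_add_ne_zero_of_summable (fun i => ?_) ?_
  · simpa only [sub_eq_add_neg] using one_sub_pow_succ_ne_zero hp i
  · simp only [norm_neg, norm_pow]
    exact (summable_nat_add_iff 1).mpr (summable_geometric_of_lt_one (norm_nonneg p) hp)

lemma tendsto_invQFactorial {p : ℂ} (hp : ‖p‖ < 1) :
    Tendsto (invQFactorial p) atTop (nhds (∏' i, (1 - p ^ (i + 1)))⁻¹) := by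
  have htoNat : Tendsto Int.toNat atTop atTop :=
    tendsto_atTop_atTop.mpr fun b => ⟨b, fun a ha => by lia⟩
  refine (((tendsto_prod_one_sub_pow hp).inv₀ (tprod_one_sub_pow_ne_zero hp)).comp
    htoNat).congr' ?_
  filter_upwards [eventually_ge_atTop 0] with a ha
  simp only [invQFactorial, if_neg ha.not_gt, Function.comp]

lemma exists_norm_invQFactorial_le {p : ℂ} (hp : ‖p‖ < 1) :
    ∃ M, ∀ a, ‖invQFactorial p a‖ ≤ M := by
  obtain ⟨M, hM⟩ := (Metric.isBounded_range_of_tendsto _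
    ((tendsto_invQFactorial hp).comp tendsto_natCast_atTop_atTop)).exists_norm_le
  have hnat : ∀ n : ℕ, ‖invQFactorial p n‖ ≤ M := fun n => hM _ ⟨n, rfl⟩
  refine ⟨M, fun a => ?_⟩
  rcases lt_or_ge a 0 with ha | ha
  · rw [invQFactorial, if_pos ha, norm_zero]
    exact (norm_nonneg _).trans (hnat 0)
  · lift a to ℕ using ha
    exact hnat a

lemma tendsto_centralQBinomial {p : ℂ} (hp : ‖p‖ < 1) (n : ℤ) :
    Tendsto (fun K => centralQBinomial p K n) atTop (nhds (∏' i, (1 - p ^ (i + 1)))⁻¹) := by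
  have hprod := (tendsto_prod_one_sub_pow hp).comp
    (tendsto_id.const_mul_atTop' (show 0 < 2 by norm_num))
  have hadd := (tendsto_invQFactorial hp).comp
    (tendsto_atTop_add_const_right _ n tendsto_natCast_atTop_atTop)
  have hsub := (tendsto_invQFactorial hp).comp
    (tendsto_atTop_add_const_right _ (-n) tendsto_natCast_atTop_atTop)
  have h := hprod.mul (hadd.mul hsub)
  rwa [mul_inv_cancel_left₀ (tprod_one_sub_pow_ne_zero hp)] at h

lemma exists_norm_centralQBinomial_le {p : ℂ} (hp : ‖p‖ < 1) :
    ∃ M, ∀ K n, ‖centralQBinomial p K n‖ ≤ M := by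
  obtain ⟨M₁, hM₁⟩ := (Metric.isBounded_range_of_tendsto _
    (tendsto_prod_one_sub_pow hp)).exists_norm_le
  obtain ⟨M₂, hM₂⟩ := exists_norm_invQFactorial_le hp
  have hM₂_nonneg : 0 ≤ M₂ := (norm_nonneg _).trans (hM₂ 0)
  have hprod : ∀ K, ‖∏ i ∈ Finset.range K, (1 - p ^ (i + 1))‖ ≤ M₁ := fun K => hM₁ _ ⟨K, rfl⟩
  refine ⟨M₁ * (M₂ * M₂), fun K n => ?_⟩
  rw [centralQBinomial, norm_mul, norm_mul]
  have hM₁_nonneg : 0 ≤ M₁ := (norm_nonneg _).trans (hprod 0)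
  gcongr
  exacts [hprod _, hM₂ _, hM₂ _]

lemma jacobiTheta₂_term_eq_zpow_mul_zpow (n : ℤ) (z τ : ℂ) :
    jacobiTheta₂_term n z τ =
      Complex.exp (2 * π * I * z) ^ n * Complex.exp (π * I * τ) ^ (n ^ 2) := by
  rw [← Complex.exp_int_mul, ← Complex.exp_int_mul, ← Complex.exp_add, jacobiTheta₂_term]
  push_cast
  ring_nf

lemma norm_exp_pi_mul_I_mul_lt_one {τ : ℂ} (hτ : 0 < τ.im) : ‖Complex.exp (π * I * τ)‖ < 1 := by
  rw [Complex.norm_exp, Real.exp_lt_one_iff]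
  simpa using mul_pos Real.pi_pos hτ

lemma summable_norm_mul_pow_odd (c : ℂ) {q : ℂ} (hq : ‖q‖ < 1) :
    Summable fun k : ℕ => ‖c * q ^ (2 * k + 1)‖ := by
  simp only [norm_mul, norm_pow]
  exact ((summable_geometric_of_lt_one (norm_nonneg q) hq).comp_injective
    (i := fun k => 2 * k + 1) fun a b h => by simpa using h).mul_left _

lemma multipliable_one_add_mul_pow_odd (c : ℂ) {q : ℂ} (hq : ‖q‖ < 1) :
    Multipliable fun k : ℕ => 1 + c * q ^ (2 * k + 1) :=
  multipliable_one_add_of_summable (summable_norm_mul_pow_odd c hq)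

theorem hasProd_jacobiTheta₂ (z : ℂ) {τ : ℂ} (hτ : 0 < τ.im) :
    HasProd (fun k : ℕ =>
        (1 + Complex.exp (2 * π * I * z) * Complex.exp (π * I * τ) ^ (2 * k + 1)) *
        (1 + (Complex.exp (2 * π * I * z))⁻¹ * Complex.exp (π * I * τ) ^ (2 * k + 1)))
      ((∏' i, (1 - (Complex.exp (π * I * τ) ^ 2) ^ (i + 1)))⁻¹ * jacobiTheta₂ z τ) := by
  have hterm := fun n => jacobiTheta₂_term_eq_zpow_mul_zpow n z τ
  have hx₀ := Complex.exp_ne_zero (2 * π * I * z)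
  have hq₀ := Complex.exp_ne_zero (π * I * τ)
  have hq := norm_exp_pi_mul_I_mul_lt_one hτ
  generalize Complex.exp (2 * π * I * z) = x at hterm hx₀ ⊢
  generalize Complex.exp (π * I * τ) = q at hterm hq₀ hq ⊢
  have hp : ‖q ^ 2‖ < 1 :=
    (norm_pow q 2).trans_lt (pow_lt_one₀ (norm_nonneg q) hq two_ne_zero)
  obtain ⟨M, hM⟩ := exists_norm_centralQBinomial_le hp
  have htendsto := tendsto_tsum_of_dominated_convergence
    (bound := fun n => M * ‖jacobiTheta₂_term n z τ‖)
    (((summable_jacobiTheta₂_term_iff z τ).mpr hτ).norm.mul_left M)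
    (fun n => (tendsto_centralQBinomial hp n).mul_const (jacobiTheta₂_term n z τ))
    (Eventually.of_forall fun K n => by rw [norm_mul]; gcongr; exact hM K n)
  simp only [tsum_mul_left, hterm, (hasSum_centralQBinomial_mul hq₀ hq hx₀ _).tsum_eq] at htendsto
  have hmult := (multipliable_one_add_mul_pow_odd x hq).mul
    (multipliable_one_add_mul_pow_odd x⁻¹ hq)
  convert hmult.hasProd using 1
  simp only [jacobiTheta₂, hterm]
  exact tendsto_nhds_unique htendsto hmult.hasProd.tendsto_prod_nat

lemma tprod_one_add_mul_pow_odd_ne_zero {c q : ℂ} (hc : ‖c‖ ≤ 1) (hq : ‖q‖ < 1) :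
    ∏' k : ℕ, (1 + c * q ^ (2 * k + 1)) ≠ 0 :=
  tprod_one_add_ne_zero_of_summable (fun k => one_add_mul_pow_ne_zero hc hq (2 * k).succ_ne_zero)
    (summable_norm_mul_pow_odd c hq)

lemma jacobiTheta₂_ofReal_ne_zero (x : ℝ) {τ : ℂ} (hτ : 0 < τ.im) : jacobiTheta₂ x τ ≠ 0 := by
  intro hzero
  have hprod := hasProd_jacobiTheta₂ x hτ
  rw [hzero, mul_zero] at hprod
  have hq := norm_exp_pi_mul_I_mul_lt_one hτ
  have hx : ‖Complex.exp (2 * π * I * x)‖ = 1 := by simp [Complex.norm_exp]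
  have hx_inv : ‖(Complex.exp (2 * π * I * x))⁻¹‖ = 1 := by rw [norm_inv, hx, inv_one]
  refine mul_ne_zero (tprod_one_add_mul_pow_odd_ne_zero hx.le hq)
    (tprod_one_add_mul_pow_odd_ne_zero hx_inv.le hq) ?_
  exact ((multipliable_one_add_mul_pow_odd _ hq).hasProd.mul
    (multipliable_one_add_mul_pow_odd _ hq).hasProd).unique hprod

lemma hasProd_one_add_two_mul_cos_mul_add_sq (z : ℂ) {τ : ℂ} (hτ : 0 < τ.im) :
    HasProd (fun k : ℕ => 1 + 2 * Complex.cos (2 * π * z) * Complex.exp (π * I * τ) ^ (2 * k + 1) +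
        (Complex.exp (π * I * τ) ^ (2 * k + 1)) ^ 2)
      ((∏' i, (1 - (Complex.exp (π * I * τ) ^ 2) ^ (i + 1)))⁻¹ * jacobiTheta₂ z τ) := by
  refine (hasProd_jacobiTheta₂ z hτ).congr_fun fun k => ?_
  rw [Complex.two_cos, neg_mul, Complex.exp_neg, show 2 * π * z * I = 2 * π * I * z by ring]
  linear_combination -(Complex.exp (π * I * τ) ^ (2 * k + 1)) ^ 2 *
    mul_inv_cancel₀ (Complex.exp_ne_zero (2 * π * I * z))

lemma exp_pi_mul_I_mul_I_mul (t : ℝ) :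
    Complex.exp (π * I * (I * t)) = (Real.exp (-(π * t)) : ℂ) := by
  rw [Complex.ofReal_exp]
  congr 1
  push_cast
  linear_combination (π * t) * Complex.I_sq

lemma two_mul_cos_two_pi_mul_one_div_eight : 2 * Complex.cos (2 * π * (1 / 8)) = (√2 : ℝ) := by
  rw [show (2 * π * (1 / 8) : ℂ) = ((π / 4 : ℝ) : ℂ) by push_cast; ring, ← Complex.ofReal_cos,
    Real.cos_pi_div_four]
  push_cast
  ring

lemma two_mul_cos_two_pi_mul_five_div_eight : 2 * Complex.cos (2 * π * (5 / 8)) = -(√2 : ℝ) := by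
  rw [show (2 * π * (5 / 8) : ℂ) = 2 * π * (1 / 8) + π by ring, Complex.cos_add_pi, mul_neg,
    two_mul_cos_two_pi_mul_one_div_eight]

lemma jacobiTheta₂_one_div_eight_eq_exp_mul {t : ℝ} (ht : 0 < t) :
    jacobiTheta₂ (1 / 8) (I * t) =
      Real.exp (2 * √2 * ∑' p, lambertTerm (Real.exp (-(π * t))) p) *
        jacobiTheta₂ (5 / 8) (I * t) := by
  have hτ : 0 < (I * t : ℂ).im := by simpa using ht
  have hlt : Real.exp (-(π * t)) < 1 := by
    simpa using mul_pos Real.pi_pos ht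
  have hone := hasProd_one_add_two_mul_cos_mul_add_sq (1 / 8) hτ
  have hfive := hasProd_one_add_two_mul_cos_mul_add_sq (5 / 8) hτ
  have hL : (∏' i, (1 - (Complex.exp (π * I * (I * t)) ^ 2) ^ (i + 1)))⁻¹ ≠ 0 :=
    inv_ne_zero (tprod_one_sub_pow_ne_zero ((norm_pow _ 2).trans_lt (pow_lt_one₀ (norm_nonneg _)
      (norm_exp_pi_mul_I_mul_lt_one hτ) two_ne_zero)))
  rw [two_mul_cos_two_pi_mul_one_div_eight] at hone
  rw [two_mul_cos_two_pi_mul_five_div_eight] at hfive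
  generalize (∏' i, (1 - (Complex.exp (π * I * (I * t)) ^ 2) ^ (i + 1)))⁻¹ = L at hone hfive hL
  rw [exp_pi_mul_I_mul_I_mul] at hone hfive
  have hratio := (Real.hasProd_of_hasSum_log (fun k => div_pos (one_add_sqrt_two_mul_add_sq_pos _)
    (one_sub_sqrt_two_mul_add_sq_pos _))
    (hasSum_log_one_add_div_one_sub (Real.exp_pos _).le hlt)).map
    Complex.ofRealHom Complex.continuous_ofReal
  refine mul_left_cancel₀ hL ?_
  rw [mul_left_comm]
  refine hone.unique ((hratio.mul hfive).congr_fun fun k => ?_)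
  have hne : (1 - √2 * Real.exp (-(π * t)) ^ (2 * k + 1) +
      (Real.exp (-(π * t)) ^ (2 * k + 1)) ^ 2 : ℂ) ≠ 0 := by
    exact_mod_cast (one_sub_sqrt_two_mul_add_sq_pos _).ne'
  simp only [Function.comp, Complex.ofRealHom_eq_coe]
  rw [neg_mul, ← sub_eq_add_neg]
  push_cast at hne ⊢
  rw [div_mul_cancel₀ _ hne]

end TripleProduct

section ThetaIdentities

open scoped Real
open Complex (I)

variable {τ : ℂ}

lemma hasSum_of_isCompl_range {α β γ M : Type*} [AddCommMonoid M] [TopologicalSpace M]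
    [ContinuousAdd M] {f : α → M} {g : β → α} {h : γ → α} {a b : M} (hg : g.Injective)
    (hh : h.Injective) (hcompl : IsCompl (Set.range g) (Set.range h)) (ha : HasSum (f ∘ g) a)
    (hb : HasSum (f ∘ h) b) : HasSum f (a + b) :=
  (hg.hasSum_range_iff.mpr ha).add_isCompl hcompl (hh.hasSum_range_iff.mpr hb)

lemma injective_add_add_sub (c : ℤ) :
    Function.Injective fun p : ℤ × ℤ => (p.1 + p.2 + c, p.1 - p.2) := by
  rintro ⟨a, b⟩ ⟨a', b'⟩ h
  simp only [Prod.mk.injEq] at h ⊢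
  lia

lemma isCompl_range_add_sub :
    IsCompl (Set.range fun p : ℤ × ℤ => (p.1 + p.2, p.1 - p.2))
      (Set.range fun p : ℤ × ℤ => (p.1 + p.2 + 1, p.1 - p.2)) := by
  refine ⟨Set.disjoint_left.mpr ?_, codisjoint_iff.mpr
    (Set.eq_univ_of_forall fun x => ?_)⟩
  · rintro _ ⟨p, rfl⟩ ⟨q, hq⟩
    simp only [Prod.mk.injEq] at hq
    lia
  · rcases Int.even_or_odd' (x.1 + x.2) with ⟨k, hk | hk⟩
    · exact Or.inl ⟨(k, x.1 - k), Prod.ext (by simp) (by simp; lia)⟩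
    · exact Or.inr ⟨(k, x.1 - k - 1), Prod.ext (by simp; lia) (by simp; lia)⟩

lemma hasSum_jacobiTheta₂_term_mul (z w : ℂ) (hτ : 0 < τ.im) :
    HasSum (fun p : ℤ × ℤ => jacobiTheta₂_term p.1 z τ * jacobiTheta₂_term p.2 w τ)
      (jacobiTheta₂ z τ * jacobiTheta₂ w τ) := by
  have hz := ((summable_jacobiTheta₂_term_iff z τ).mpr hτ).norm
  have hw := ((summable_jacobiTheta₂_term_iff w τ).mpr hτ).norm
  rw [jacobiTheta₂, jacobiTheta₂, tsum_mul_tsum_of_summable_norm hz hw]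
  exact (summable_mul_of_summable_norm hz hw).hasSum

-- Split the double series according to the parity of the sum of the two indices.
lemma jacobiTheta₂_mul_jacobiTheta₂ (z w : ℂ) (hτ : 0 < τ.im) :
    jacobiTheta₂ z τ * jacobiTheta₂ w τ =
      jacobiTheta₂ (z + w) (2 * τ) * jacobiTheta₂ (z - w) (2 * τ) +
        Complex.exp (2 * π * I * z + π * I * τ) *
          (jacobiTheta₂ (z + w + τ) (2 * τ) * jacobiTheta₂ (z - w + τ) (2 * τ)) := by
  have hτ₂ : 0 < (2 * τ).im := by simpa using hτ
  have heven := hasSum_jacobiTheta₂_term_mul (z + w) (z - w) hτ₂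
  have hodd := (hasSum_jacobiTheta₂_term_mul (z + w + τ) (z - w + τ) hτ₂).mul_left
    (Complex.exp (2 * π * I * z + π * I * τ))
  refine (hasSum_jacobiTheta₂_term_mul z w hτ).unique (hasSum_of_isCompl_range
    (by simpa using injective_add_add_sub 0) (injective_add_add_sub 1) isCompl_range_add_sub
    (heven.congr_fun fun p => ?_) (hodd.congr_fun fun p => ?_)) <;>
  · simp only [Function.comp, jacobiTheta₂_term, ← Complex.exp_add]
    push_cast
    ring_nf

lemma jacobiTheta₂_eq_add_exp_mul (z : ℂ) (hτ : 0 < τ.im) :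
    jacobiTheta₂ z τ = jacobiTheta₂ (2 * z) (4 * τ) +
      Complex.exp (2 * π * I * z + π * I * τ) * jacobiTheta₂ (2 * z + 2 * τ) (4 * τ) := by
  have hτ₄ : 0 < (4 * τ).im := by simpa using hτ
  have hcompl : IsCompl (Set.range fun n : ℤ => 2 * n) (Set.range fun n : ℤ => 2 * n + 1) := by
    rw [range_two_mul, range_two_mul_add_one]
    exact Int.isCompl_even_odd
  refine (hasSum_jacobiTheta₂_term z hτ).unique (hasSum_of_isCompl_range
    (fun a b h => by simpa using h) (fun a b h => by simpa using h) hcompl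
    ((hasSum_jacobiTheta₂_term (2 * z) hτ₄).congr_fun fun n => ?_)
    (((hasSum_jacobiTheta₂_term (2 * z + 2 * τ) hτ₄).mul_left _).congr_fun fun n => ?_)) <;>
  · simp only [Function.comp, jacobiTheta₂_term, ← Complex.exp_add]
    push_cast
    ring_nf

lemma jacobiTheta₂_add_half_eq_sub_exp_mul (z : ℂ) (hτ : 0 < τ.im) :
    jacobiTheta₂ (z + 1 / 2) τ = jacobiTheta₂ (2 * z) (4 * τ) -
      Complex.exp (2 * π * I * z + π * I * τ) * jacobiTheta₂ (2 * z + 2 * τ) (4 * τ) := by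
  have hexp : Complex.exp (2 * π * I * (z + 1 / 2) + π * I * τ) =
      -Complex.exp (2 * π * I * z + π * I * τ) := by
    rw [← Complex.exp_add_pi_mul_I]
    ring_nf
  rw [jacobiTheta₂_eq_add_exp_mul _ hτ, hexp, neg_mul, ← sub_eq_add_neg,
    ← jacobiTheta₂_add_left (2 * z), ← jacobiTheta₂_add_left (2 * z + 2 * τ)]
  ring_nf

lemma jacobiTheta₂_half_add_two_mul_eq_zero (τ : ℂ) : jacobiTheta₂ (1 / 2 + τ) (2 * τ) = 0 := by
  have hneg : jacobiTheta₂ (1 / 2 - τ) (2 * τ) = jacobiTheta₂ (1 / 2 + τ) (2 * τ) := by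
    rw [← jacobiTheta₂_neg_left, ← jacobiTheta₂_add_left]
    ring_nf
  have hshift := jacobiTheta₂_add_left' (1 / 2 - τ) (2 * τ)
  have hexp : Complex.exp (-π * I * (2 * τ + 2 * (1 / 2 - τ))) = -1 := by
    rw [← Complex.exp_neg_pi_mul_I]
    ring_nf
  rw [hexp, show 1 / 2 - τ + 2 * τ = 1 / 2 + τ by ring, hneg] at hshift
  linear_combination hshift / 2

lemma jacobiTheta₂_add_one_right (z τ : ℂ) :
    jacobiTheta₂ z (τ + 1) = jacobiTheta₂ (z + 1 / 2) τ := by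
  refine tsum_congr fun n => ?_
  obtain ⟨k, hk⟩ := Int.even_mul_succ_self n
  have hk' : (n : ℂ) * (n + 1) = k + k := mod_cast hk
  rw [jacobiTheta₂_term, jacobiTheta₂_term, Complex.exp_eq_exp_iff_exists_int]
  refine ⟨k - n, ?_⟩
  push_cast
  linear_combination (π * I) * hk'

/-- The theta constant `ϑ₂(τ) = ∑ exp (π * I * (n + 1 / 2) ^ 2 * τ)`, written as a shift of the
two-variable theta function. -/
noncomputable def thetaNull₂ (τ : ℂ) : ℂ :=
  Complex.exp (π * I * τ / 4) * jacobiTheta₂ (τ / 2) τ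

/-- The theta constant `ϑ₃(τ) = ∑ exp (π * I * n ^ 2 * τ)`, in the notation shared with
`thetaNull₂` and `thetaNull₄`. -/
noncomputable def thetaNull₃ (τ : ℂ) : ℂ := jacobiTheta₂ 0 τ

/-- The theta constant `ϑ₄(τ) = ∑ (-1) ^ n * exp (π * I * n ^ 2 * τ)`, as the value of the
two-variable theta function at `z = 1 / 2`. -/
noncomputable def thetaNull₄ (τ : ℂ) : ℂ := jacobiTheta₂ (1 / 2) τ

lemma thetaNull₃_ne_zero (hτ : 0 < τ.im) : thetaNull₃ τ ≠ 0 := by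
  simpa [thetaNull₃] using jacobiTheta₂_ofReal_ne_zero 0 hτ

lemma thetaNull₄_ne_zero (hτ : 0 < τ.im) : thetaNull₄ τ ≠ 0 := by
  simpa [thetaNull₄] using jacobiTheta₂_ofReal_ne_zero (1 / 2) hτ

lemma thetaNull₃_add_one (τ : ℂ) : thetaNull₃ (τ + 1) = thetaNull₄ τ := by
  rw [thetaNull₃, thetaNull₄, jacobiTheta₂_add_one_right, zero_add]

lemma thetaNull₄_add_one (τ : ℂ) : thetaNull₄ (τ + 1) = thetaNull₃ τ := by
  rw [thetaNull₃, thetaNull₄, jacobiTheta₂_add_one_right, ← jacobiTheta₂_add_left 0]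
  norm_num

lemma neg_I_mul_thetaNull₃_sq (hτ : τ ≠ 0) :
    -I * τ * thetaNull₃ τ ^ 2 = thetaNull₃ (-1 / τ) ^ 2 := by
  have hsqrt : ((-I * τ) ^ (1 / 2 : ℂ)) ^ 2 = -I * τ := by
    rw [← Complex.cpow_nat_mul]
    norm_num
  have hne : -I * τ ≠ 0 := by simp [hτ]
  rw [thetaNull₃, thetaNull₃, jacobiTheta₂_functional_equation 0 τ, mul_pow, mul_pow, div_pow,
    hsqrt, one_pow, ← mul_assoc, ← mul_assoc, mul_one_div_cancel hne]
  simp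

lemma thetaNull₂_two_mul_sq (τ : ℂ) :
    thetaNull₂ (2 * τ) ^ 2 = Complex.exp (π * I * τ) * jacobiTheta₂ τ (2 * τ) ^ 2 := by
  rw [thetaNull₂, mul_pow, ← Complex.exp_nat_mul, mul_div_cancel_left₀ τ two_ne_zero]
  push_cast
  ring_nf

lemma thetaNull₃_sq (hτ : 0 < τ.im) :
    thetaNull₃ τ ^ 2 = thetaNull₃ (2 * τ) ^ 2 + thetaNull₂ (2 * τ) ^ 2 := by
  have h := jacobiTheta₂_mul_jacobiTheta₂ 0 0 hτ
  simp only [add_zero, sub_zero, mul_zero, zero_add] at h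
  rw [thetaNull₂_two_mul_sq, thetaNull₃, thetaNull₃]
  linear_combination h

lemma thetaNull₄_sq (hτ : 0 < τ.im) :
    thetaNull₄ τ ^ 2 = thetaNull₃ (2 * τ) ^ 2 - thetaNull₂ (2 * τ) ^ 2 := by
  have h := jacobiTheta₂_mul_jacobiTheta₂ (1 / 2) (1 / 2) hτ
  have hexp : Complex.exp (2 * π * I * (1 / 2) + π * I * τ) = -Complex.exp (π * I * τ) := by
    rw [← Complex.exp_add_pi_mul_I]
    ring_nf
  rw [hexp, sub_self, zero_add, show (1 / 2 + 1 / 2 : ℂ) = 0 + 1 by norm_num,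
    add_right_comm, jacobiTheta₂_add_left, jacobiTheta₂_add_left, zero_add] at h
  rw [thetaNull₂_two_mul_sq, thetaNull₃, thetaNull₄]
  linear_combination h

lemma thetaNull₃_mul_thetaNull₄ (hτ : 0 < τ.im) :
    thetaNull₃ τ * thetaNull₄ τ = thetaNull₄ (2 * τ) ^ 2 := by
  have h := jacobiTheta₂_mul_jacobiTheta₂ 0 (1 / 2) hτ
  rw [zero_add, zero_sub, jacobiTheta₂_half_add_two_mul_eq_zero, zero_mul, mul_zero, add_zero,
    jacobiTheta₂_neg_left] at h
  rw [thetaNull₃, thetaNull₄, thetaNull₄, h, sq]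

lemma jacobiTheta₂_one_div_four_sq (hτ : 0 < τ.im) :
    jacobiTheta₂ (1 / 4) τ ^ 2 = thetaNull₄ (2 * τ) * thetaNull₃ (2 * τ) := by
  have h := jacobiTheta₂_mul_jacobiTheta₂ (1 / 4) (1 / 4) hτ
  rw [sub_self, show (1 / 4 + 1 / 4 : ℂ) = 1 / 2 by norm_num,
    jacobiTheta₂_half_add_two_mul_eq_zero, zero_mul, mul_zero, add_zero] at h
  rw [sq, h, thetaNull₃, thetaNull₄]

lemma exp_mul_jacobiTheta₂_one_div_four_add_sq (hτ : 0 < τ.im) :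
    (Complex.exp (π * I / 4 + π * I * τ / 4) * jacobiTheta₂ (1 / 4 + τ / 2) τ) ^ 2 =
      thetaNull₄ (2 * τ) * thetaNull₂ (2 * τ) := by
  have h := jacobiTheta₂_mul_jacobiTheta₂ (1 / 4 + τ / 2) (1 / 4 + τ / 2) hτ
  rw [sub_self, zero_add, show 1 / 4 + τ / 2 + (1 / 4 + τ / 2) = 1 / 2 + τ by ring,
    jacobiTheta₂_half_add_two_mul_eq_zero, zero_mul, zero_add,
    show 1 / 2 + τ + τ = 1 / 2 + 2 * τ by ring, jacobiTheta₂_add_left'] at h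
  rw [mul_pow, sq (jacobiTheta₂ _ _), h, thetaNull₂, thetaNull₄,
    mul_div_cancel_left₀ τ two_ne_zero, ← Complex.exp_nat_mul]
  have hexp : Complex.exp ((2 : ℕ) * (π * I / 4 + π * I * τ / 4)) *
      (Complex.exp (2 * π * I * (1 / 4 + τ / 2) + π * I * τ) *
        Complex.exp (-π * I * (2 * τ + 2 * (1 / 2)))) = Complex.exp (π * I * (2 * τ) / 4) := by
    rw [← Complex.exp_add, ← Complex.exp_add]
    push_cast
    ring_nf
  linear_combination jacobiTheta₂ (1 / 2) (2 * τ) * jacobiTheta₂ τ (2 * τ) * hexp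

theorem sub_pow_four_mul_eq_add_pow_four_mul (hτ : 0 < τ.im) :
    (jacobiTheta₂ (1 / 8) (τ / 4) - jacobiTheta₂ (5 / 8) (τ / 4)) ^ 4 *
        (thetaNull₃ τ ^ 2 + thetaNull₄ τ ^ 2) =
      (jacobiTheta₂ (1 / 8) (τ / 4) + jacobiTheta₂ (5 / 8) (τ / 4)) ^ 4 *
        (thetaNull₃ τ ^ 2 - thetaNull₄ τ ^ 2) := by
  have hτ₄ : 0 < (τ / 4).im := by simpa using hτ
  have hone := jacobiTheta₂_eq_add_exp_mul (1 / 8) hτ₄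
  have hfive := jacobiTheta₂_add_half_eq_sub_exp_mul (1 / 8) hτ₄
  rw [show (1 / 8 + 1 / 2 : ℂ) = 5 / 8 by norm_num] at hfive
  rw [show (2 * (1 / 8) : ℂ) = 1 / 4 by norm_num, show 4 * (τ / 4) = τ by ring,
    show 2 * (τ / 4) = τ / 2 by ring,
    show 2 * π * I * (1 / 8) + π * I * (τ / 4) = π * I / 4 + π * I * τ / 4 by ring] at hone hfive
  have hU := jacobiTheta₂_one_div_four_sq hτ
  have hV := exp_mul_jacobiTheta₂_one_div_four_add_sq hτ
  rw [hone, hfive, thetaNull₃_sq hτ, thetaNull₄_sq hτ]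
  set U := jacobiTheta₂ (1 / 4) τ
  set V := Complex.exp (π * I / 4 + π * I * τ / 4) * jacobiTheta₂ (1 / 4 + τ / 2) τ
  have hU₄ : U ^ 4 = (thetaNull₄ (2 * τ) * thetaNull₃ (2 * τ)) ^ 2 := by rw [← hU]; ring
  have hV₄ : V ^ 4 = (thetaNull₄ (2 * τ) * thetaNull₂ (2 * τ)) ^ 2 := by rw [← hV]; ring
  linear_combination 32 * thetaNull₃ (2 * τ) ^ 2 * hV₄ - 32 * thetaNull₂ (2 * τ) ^ 2 * hU₄

end ThetaIdentities

section SingularModuli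

open scoped Real
open Complex (I)

lemma ofReal_re_jacobiTheta₂ (x t : ℝ) :
    ((jacobiTheta₂ x (I * t)).re : ℂ) = jacobiTheta₂ x (I * t) := by
  have h := jacobiTheta₂_conj x (I * t)
  rw [Complex.conj_ofReal, show -(starRingEnd ℂ) (I * t) = I * t by simp] at h
  exact Complex.conj_eq_iff_re.mp h

/-- The complementary elliptic modulus `k'(t) = ϑ₄(i t) ^ 2 / ϑ₃(i t) ^ 2`. Both theta constants are
real on the imaginary axis, and taking real parts makes the modulus a real number. -/
noncomputable def complementaryModulus (t : ℝ) : ℝ :=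
  ((thetaNull₄ (I * t)).re / (thetaNull₃ (I * t)).re) ^ 2

lemma complementaryModulus_nonneg (t : ℝ) : 0 ≤ complementaryModulus t := sq_nonneg _

lemma ofReal_complementaryModulus (t : ℝ) :
    (complementaryModulus t : ℂ) = (thetaNull₄ (I * t) / thetaNull₃ (I * t)) ^ 2 := by
  have h₃ := ofReal_re_jacobiTheta₂ 0 t
  have h₄ := ofReal_re_jacobiTheta₂ (1 / 2) t
  push_cast at h₃ h₄
  rw [complementaryModulus, thetaNull₃, thetaNull₄]
  push_cast
  rw [h₃, h₄]

variable {t l : ℝ}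

lemma thetaNull₄_sq_eq_complementaryModulus_mul (ht : 0 < t) :
    thetaNull₄ (I * t) ^ 2 = complementaryModulus t * thetaNull₃ (I * t) ^ 2 := by
  have h₃ : thetaNull₃ (I * t) ≠ 0 := thetaNull₃_ne_zero (by simpa using ht)
  rw [ofReal_complementaryModulus]
  field_simp

lemma exp_sub_one_pow_four_mul_eq (ht : 0 < t) :
    (Real.exp (2 * √2 * ∑' p, lambertTerm (Real.exp (-(π * (t / 4)))) p) - 1) ^ 4 *
        (1 + complementaryModulus t) =
      (Real.exp (2 * √2 * ∑' p, lambertTerm (Real.exp (-(π * (t / 4)))) p) + 1) ^ 4 *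
        (1 - complementaryModulus t) := by
  have hτ : 0 < (I * t : ℂ).im := by simpa using ht
  have hrel := sub_pow_four_mul_eq_add_pow_four_mul hτ
  have hratio := jacobiTheta₂_one_div_eight_eq_exp_mul (t := t / 4) (by positivity)
  have hB : jacobiTheta₂ (5 / 8) (I * t / 4) ≠ 0 := by
    simpa using jacobiTheta₂_ofReal_ne_zero (τ := I * t / 4) (5 / 8) (by simpa using ht)
  rw [Complex.ofReal_div, Complex.ofReal_ofNat, ← mul_div_assoc] at hratio
  rw [hratio, thetaNull₄_sq_eq_complementaryModulus_mul ht] at hrel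
  have hA : thetaNull₃ (I * t) ≠ 0 := thetaNull₃_ne_zero hτ
  rw [← Complex.ofReal_inj]
  refine mul_left_cancel₀ (mul_ne_zero (pow_ne_zero 4 hB) (pow_ne_zero 2 hA)) ?_
  push_cast at hrel ⊢
  linear_combination hrel

lemma two_mul_sqrt_two_mul_tsum_lambertTerm (ht : 0 < t) (hl : 0 ≤ l)
    (hmod : l ^ 4 * (1 + complementaryModulus t) = 1 - complementaryModulus t) :
    2 * √2 * ∑' p, lambertTerm (Real.exp (-(π * (t / 4)))) p = Real.log ((1 + l) / (1 - l)) := by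
  have hS : 0 ≤ ∑' p, lambertTerm (Real.exp (-(π * (t / 4)))) p :=
    tsum_lambertTerm_nonneg (Real.exp_pos _).le
      (Real.exp_lt_one_iff.mpr (neg_lt_zero.mpr (by positivity)))
  have hP : 1 ≤ Real.exp (2 * √2 * ∑' p, lambertTerm (Real.exp (-(π * (t / 4)))) p) :=
    Real.one_le_exp (by positivity)
  have hquartic := exp_sub_one_pow_four_mul_eq ht
  rw [← Real.log_exp (2 * √2 * _)]
  set P := Real.exp (2 * √2 * ∑' p, lambertTerm (Real.exp (-(π * (t / 4)))) p)
  have hpow : (P - 1) ^ 4 = (l * (P + 1)) ^ 4 := by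
    refine mul_right_cancel₀ (b := 1 + complementaryModulus t)
      (by linarith [complementaryModulus_nonneg t]) ?_
    rw [hquartic, ← hmod]
    ring
  have hlin : P - 1 = l * (P + 1) :=
    (pow_left_inj₀ (by linarith) (by positivity) four_ne_zero).mp hpow
  have hl₁ : 1 - l ≠ 0 := fun h => by nlinarith
  rw [eq_div_of_mul_eq hl₁ (by linear_combination hlin : P * (1 - l) = 1 + l)]

theorem hasSum_tsum_neg_one_zpow_div_sq_add_sq (ht : 0 < t) (hl : 0 ≤ l)
    (hmod : l ^ 4 * (1 + complementaryModulus t) = 1 - complementaryModulus t) :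
    HasSum
      (fun n : ℤ => ∑' m : ℤ, (-1 : ℝ) ^ (m + n) / ((4 * m) ^ 2 + t ^ 2 * (4 * n + 1) ^ 2))
      (π / (4 * (√2 * t)) * Real.log ((1 + l) / (1 - l))) := by
  simp_rw [tsum_neg_one_zpow_div_sq_add_sq ht.ne']
  have hsum := (hasSum_neg_one_zpow_div_mul_sinh (by positivity : 0 < π * t / 4)).mul_left
    (π / (4 * t))
  rw [← two_mul_sqrt_two_mul_tsum_lambertTerm ht hl hmod, ← mul_div_assoc,
    show ∀ S : ℝ, π / (4 * (√2 * t)) * (2 * √2 * S) = π / (4 * t) * (2 * S) by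
      intro S; field_simp]
  exact hsum

end SingularModuli

section DiscriminantNegSeven

open scoped Real
open Complex (I)

lemma thetaNull₃_sq_add_thetaNull₄_sq {τ : ℂ} (hτ : 0 < τ.im) :
    thetaNull₃ τ ^ 2 + thetaNull₄ τ ^ 2 = 2 * thetaNull₃ (2 * τ) ^ 2 := by
  linear_combination thetaNull₃_sq hτ + thetaNull₄_sq hτ

variable {α : ℂ}

-- The equation says that `-1 / (α - 1) = α / 2`: the point `α / 2` is a modular image of `α`.
lemma thetaNull₃_half_sq (hα : 0 < α.im) (hquad : α ^ 2 = α - 2) :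
    thetaNull₃ (α / 2) ^ 2 = -I * (α - 1) * thetaNull₄ α ^ 2 := by
  have hne : α - 1 ≠ 0 := fun h => by simp [sub_eq_zero.mp h] at hα
  have hinv : -1 / (α - 1) = α / 2 := by
    rw [div_eq_div_iff hne two_ne_zero]
    linear_combination -hquad
  rw [← hinv, ← neg_I_mul_thetaNull₃_sq hne, ← thetaNull₄_add_one, sub_add_cancel]

lemma thetaNull₄_half_sq (hα : 0 < α.im) (hquad : α ^ 2 = α - 2) :
    thetaNull₄ (α / 2) ^ 2 = -I * (α / 2) * thetaNull₄ α ^ 2 := by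
  have hprod := thetaNull₃_mul_thetaNull₄ (τ := α / 2) (by simpa using hα)
  rw [mul_div_cancel₀ α two_ne_zero] at hprod
  have hinv : -I * (α - 1) * thetaNull₄ (α / 2) ^ 2 = thetaNull₄ α ^ 2 := by
    refine mul_left_cancel₀ (pow_ne_zero 2 (thetaNull₄_ne_zero hα)) ?_
    linear_combination -thetaNull₄ (α / 2) ^ 2 * thetaNull₃_half_sq hα hquad +
      (thetaNull₃ (α / 2) * thetaNull₄ (α / 2) + thetaNull₄ α ^ 2) * hprod
  rw [← hinv]
  linear_combination thetaNull₄ (α / 2) ^ 2 / 2 * (hquad - (α ^ 2 - α) * Complex.I_sq)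

lemma thetaNull₃_sq_eq_mul_thetaNull₄_sq (hα : 0 < α.im) (hquad : α ^ 2 = α - 2) :
    thetaNull₃ α ^ 2 = -I * (3 * α - 2) / 4 * thetaNull₄ α ^ 2 := by
  have hsum := thetaNull₃_sq_add_thetaNull₄_sq (τ := α / 2) (by simpa using hα)
  rw [mul_div_cancel₀ α two_ne_zero, thetaNull₃_half_sq hα hquad,
    thetaNull₄_half_sq hα hquad] at hsum
  linear_combination -hsum / 2

lemma thetaNull₄_two_mul_sub_one_pow_four (hα : 0 < α.im) (hquad : α ^ 2 = α - 2) :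
    16 * thetaNull₄ (2 * α - 1) ^ 4 =
      (8 + 3 * (-I * (2 * α - 1))) * thetaNull₃ (2 * α - 1) ^ 4 := by
  have h₃ : thetaNull₃ (2 * α) = thetaNull₄ (2 * α - 1) := by
    rw [← thetaNull₃_add_one, sub_add_cancel]
  have h₄ : thetaNull₄ (2 * α) = thetaNull₃ (2 * α - 1) := by
    rw [← thetaNull₄_add_one, sub_add_cancel]
  have hsum := thetaNull₃_sq_add_thetaNull₄_sq hα
  have hprod := thetaNull₃_mul_thetaNull₄ hα
  have hcm := thetaNull₃_sq_eq_mul_thetaNull₄_sq hα hquad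
  rw [h₃] at hsum
  rw [h₄] at hprod
  have hquartic : thetaNull₃ α ^ 4 + thetaNull₄ α ^ 4 =
      3 * (-I * (2 * α - 1)) / 4 * (thetaNull₃ α * thetaNull₄ α) ^ 2 := by
    rw [show thetaNull₃ α ^ 4 = (thetaNull₃ α ^ 2) ^ 2 by ring, mul_pow, hcm]
    linear_combination thetaNull₄ α ^ 4 / 16 *
      (9 * hquad + (-9 * α ^ 2 + 9 * α - 2) * Complex.I_sq)
  linear_combination
    -4 * (thetaNull₃ α ^ 2 + thetaNull₄ α ^ 2 + 2 * thetaNull₄ (2 * α - 1) ^ 2) * hsum +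
    4 * hquartic + (8 + 3 * (-I * (2 * α - 1))) *
      (thetaNull₃ α * thetaNull₄ α + thetaNull₃ (2 * α - 1) ^ 2) * hprod

theorem complementaryModulus_sqrt_seven : complementaryModulus √7 = √2 * (3 + √7) / 8 := by
  have h₂ : √2 ^ 2 = 2 := by norm_num
  have h₇ : √7 ^ 2 = 7 := by norm_num
  have hα : 0 < ((1 + I * √7) / 2 : ℂ).im := by simp
  have hquad : ((1 + I * √7) / 2 : ℂ) ^ 2 = (1 + I * √7) / 2 - 2 := by
    have h₇' : (√7 : ℂ) ^ 2 = 7 := mod_cast h₇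
    linear_combination (√7 : ℂ) ^ 2 / 4 * Complex.I_sq - h₇' / 4
  have hpow := thetaNull₄_two_mul_sub_one_pow_four hα hquad
  have h₃ : thetaNull₃ (I * √7) ≠ 0 := thetaNull₃_ne_zero (by simp)
  rw [mul_div_cancel₀ _ two_ne_zero, add_sub_cancel_left, neg_mul, ← mul_assoc I,
    Complex.I_mul_I, neg_one_mul, neg_neg] at hpow
  have hsq : complementaryModulus √7 ^ 2 = (8 + 3 * √7) / 16 := by
    rw [← Complex.ofReal_inj]
    push_cast
    rw [ofReal_complementaryModulus, ← pow_mul, div_pow, div_eq_iff (pow_ne_zero _ h₃)]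
    linear_combination hpow / 16
  rw [← sq_eq_sq₀ (complementaryModulus_nonneg _) (by positivity), hsq]
  linear_combination -(9 + 6 * √7 + √7 ^ 2) / 64 * h₂ - h₇ / 32

lemma pow_four_mul_one_add_complementaryModulus_sqrt_seven :
    ((√2 - 1) * √(2 * √2 - √7)) ^ 4 * (1 + complementaryModulus √7) =
      1 - complementaryModulus √7 := by
  have h₂ : √2 ^ 2 = 2 := by norm_num
  have h₇ : √7 ^ 2 = 7 := by norm_num
  have hle : √7 ≤ 2 * √2 := Real.sqrt_le_iff.mpr ⟨by positivity, by rw [mul_pow, h₂]; norm_num⟩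
  have hleft : (√2 - 1) ^ 4 = 17 - 12 * √2 := by
    linear_combination (√2 ^ 2 - 4 * √2 + 8) * h₂
  have hright : √(2 * √2 - √7) ^ 4 = 15 - 4 * √2 * √7 := by
    rw [show 4 = 2 * 2 from rfl, pow_mul, Real.sq_sqrt (sub_nonneg.mpr hle)]
    linear_combination 4 * h₂ + h₇
  rw [complementaryModulus_sqrt_seven, mul_pow, hleft, hright]
  linear_combination (48 * √7 * (1 + √2 * (3 + √7) / 8) - (180 + 68 * √7) * (3 + √7) / 8) * h₂ +
    (12 * √2 - 17) * h₇

end DiscriminantNegSeven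

/-- `∑∑ (-1)^{m+n}/((4m)² + 7(4n+1)²)
  = (π/(4√14)) log((1 + (√2-1)√(2√2-√7))/(1 - (√2-1)√(2√2-√7)))`. -/
theorem F41_at_four_over_sqrt_seven :
    Tendsto (fun N : ℕ => ∑ n ∈ Finset.Ioo (-(N : ℤ)) (N : ℤ),
        ∑' m : ℤ, (-1 : ℝ) ^ (m + n) / ((4 * (m : ℝ)) ^ 2 + 7 * (4 * (n : ℝ) + 1) ^ 2))
      atTop
      (nhds (Real.pi / (4 * Real.sqrt 14) *
        Real.log ((1 + (Real.sqrt 2 - 1) * Real.sqrt (2 * Real.sqrt 2 - Real.sqrt 7))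
          / (1 - (Real.sqrt 2 - 1) * Real.sqrt (2 * Real.sqrt 2 - Real.sqrt 7))))) := by
  have hnonneg : 0 ≤ (√2 - 1) * √(2 * √2 - √7) :=
    mul_nonneg (sub_nonneg.mpr (Real.one_le_sqrt.mpr one_le_two)) (Real.sqrt_nonneg _)
  have hsum := hasSum_tsum_neg_one_zpow_div_sq_add_sq (Real.sqrt_pos.mpr (by norm_num)) hnonneg
    pow_four_mul_one_add_complementaryModulus_sqrt_seven
  rw [Real.sq_sqrt (by norm_num), ← Real.sqrt_mul zero_le_two, show (2 * 7 : ℝ) = 14 by norm_num,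
    HasSum, SummationFilter.unconditional_filter] at hsum
  exact hsum.comp Finset.tendsto_Ioo_neg
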